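/- arXiv:math/0608328 — 2 statements merged into one kernel-verified Lean document; each statement's English description precedes it below -/
import Mathlib

section
/- Let p be a prime, let r be an integer, and let m,n be nonnegative integers with m ≠ n and m ≡ n (mod p−1). Then (F_p(pm+p−1,r) − F_p(pn+p−1,r))/(p(m−n)) ≡ ((−1)^{n^*}/n^*!)·(Σ_{k=1}^{n^*−1} (B_k(−r)/k)·B_{n^*−k}(−r) − H_{n^*−1}·B_{n^*}(−r)) (mod p), where B_j(t) denotes the j-th Bernoulli polynomial. -/
open Finset

/-- `x ≡ y (mod p^c)` for rationals: `x = y` or the `p`-adic valuation of `x - y`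
is at least `c`. -/
def modCong (p : ℕ) (c : ℤ) (x y : ℚ) : Prop :=
  x = y ∨ c ≤ padicValRat p (x - y)

/-- `C_p(n,r) = ∑_{0 ≤ k ≤ n, k ≡ r (mod p)} (-1)^k * binom(n,k)`. -/
def Cp (p n : ℕ) (r : ℤ) : ℚ :=
  ∑ k ∈ range (n+1), if ((k : ℤ) - r) % p = 0 then (-1 : ℚ)^k * (n.choose k) else 0

/-- The Fleck quotient `F_p(n,r) = (-p)^{-⌊(n-1)/(p-1)⌋} C_p(n,r) + [n = 0]`. -/
noncomputable def Fp (p n : ℕ) (r : ℤ) : ℚ :=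
  (-(p:ℚ)) ^ (-(Int.fdiv ((n:ℤ) - 1) ((p:ℤ) - 1))) * Cp p n r + (if n = 0 then 1 else 0)

/-- `n^*`: the unique integer in `{0,…,p-2}` with `n^* ≡ -n (mod p-1)`. -/
def nUp (p n : ℕ) : ℕ := ((-(n:ℤ)) % ((p:ℤ) - 1)).toNat

/-- Harmonic number `H_r = ∑_{k=1}^r 1/k`. -/
def harm (r : ℕ) : ℚ := ∑ k ∈ Finset.Icc 1 r, 1/(k:ℚ)

/-!
If `x ^ p = 1`, then `(x - 1) ^ p = -p (x - 1) u` for an integral polynomial `u` in `x`, so that,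
with `x` a generator of the group ring of `ℤ / p`, Fleck quotients are coefficients of powers of `u`
times low powers of `1 - x`. Moreover `u ^ p = 1 + p z` with `z` again integral in `x`, so raising
the exponent of `u` by `p t` changes a Fleck quotient by `p t` times a coefficient involving `z`,
up to higher powers of `p`.

Modulo `p` the group ring is `𝔽_p[X] / X ^ p`, with `x` the truncated exponential. There `u` becomes
the generating function `X / (e ^ X - 1)` of the Bernoulli numbers, and `z` satisfies
`X z' = 1 - u - (1 + u₁) X`, where `u₁` is the coefficient of `X` in `u`; hence, below degree
`p - 1`, `-z` is the exponential generating function of the `B_k / k` with `k ≥ 2`. The coefficient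
of interest is thus a binomial convolution of `B_k / k` with the Bernoulli polynomials. It agrees
with the sum of products `B_k B_{s-k} / k`, corrected by harmonic numbers, by the identity of Miki
and Gessel: both sides form Appell sequences with the same increments over `[0, 1]`.
-/

section MikiGessel

open Polynomial

theorem eq_zero_of_derivative_of_eval_one_eq {R : Type*} [CommRing R] [IsDomain R] [CharZero R]
    {P : ℕ → R[X]}
    (hder : ∀ n, derivative (P (n + 1)) = (n + 1) * P n)
    (hper : ∀ n, (P (n + 1)).eval 1 = (P (n + 1)).eval 0) (h0 : P 0 = 0) (n : ℕ) : P n = 0 := by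
  induction n with
  | zero => exact h0
  | succ n ih =>
    obtain ⟨c, hc⟩ : ∃ c, P (n + 1) = C c :=
      ⟨_, eq_C_of_derivative_eq_zero (by rw [hder, ih, mul_zero])⟩
    obtain ⟨d, hd⟩ : ∃ d, P (n + 2) - C ((n + 2) * c) * X = C d :=
      ⟨_, eq_C_of_derivative_eq_zero (by
        rw [derivative_sub, hder, hc, derivative_C_mul, derivative_X, C_mul]
        simp only [map_add, map_natCast, map_ofNat]
        push_cast
        ring)⟩
    have hval : P (n + 2) = C ((n + 2) * c) * X + C d := by rw [← hd]; ring
    have hcz : ((n : R) + 2) * c = 0 := by simpa [hval] using hper (n + 1)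
    have hn : ((n : R) + 2) ≠ 0 := by exact_mod_cast (n + 1).succ_ne_zero
    rw [hc, (mul_eq_zero.1 hcz).resolve_left hn, C_0]

/-- The polynomials `∑_{1 ≤ k ≤ n} (B_k B_{n-k} - B_n) / k` of the Miki–Gessel identity. -/
noncomputable def mikiSum (n : ℕ) : ℚ[X] :=
  ∑ i ∈ range n, C ((i : ℚ) + 1)⁻¹ *
    (Polynomial.bernoulli (i + 1) * Polynomial.bernoulli (n - (i + 1)) - Polynomial.bernoulli n)

/-- The numbers `B_k / k` for `k ≥ 2`, extended by zero. -/
def bernoulliDiv (k : ℕ) : ℚ := if k < 2 then 0 else _root_.bernoulli k / k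

/-- The Appell sequence `∑_{k ≤ n} (n choose k) a_k B_{n-k}` with coefficients `a`. -/
noncomputable def bernoulliConv (a : ℕ → ℚ) (n : ℕ) : ℚ[X] :=
  ∑ k ∈ range (n + 1), C (n.choose k * a k) * Polynomial.bernoulli (n - k)

theorem derivative_mikiSum (n : ℕ) :
    derivative (mikiSum (n + 1)) = (n + 1) * mikiSum n := by
  have hterm (i : ℕ) (hi : i ∈ range n) :
      derivative (C ((i : ℚ) + 1)⁻¹ * (Polynomial.bernoulli (i + 1) *
        Polynomial.bernoulli (n + 1 - (i + 1)) - Polynomial.bernoulli (n + 1))) =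
      (n + 1) * (C ((i : ℚ) + 1)⁻¹ * (Polynomial.bernoulli (i + 1) *
        Polynomial.bernoulli (n - (i + 1)) - Polynomial.bernoulli n)) +
      (Polynomial.bernoulli i * Polynomial.bernoulli (n - i) -
        Polynomial.bernoulli (i + 1) * Polynomial.bernoulli (n - (i + 1))) := by
    obtain ⟨j, rfl⟩ := Nat.exists_eq_add_of_lt (mem_range.1 hi)
    have hinv : C ((i : ℚ) + 1)⁻¹ * ((i : ℚ[X]) + 1) = 1 := by
      rw [← map_natCast C, ← C_1, ← C_add, ← C_mul, inv_mul_cancel₀ (by positivity)]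
    rw [show i + j + 1 + 1 - (i + 1) = j + 1 by omega, show i + j + 1 - (i + 1) = j by omega,
      show i + j + 1 - i = j + 1 by omega, derivative_C_mul, derivative_sub, derivative_mul]
    simp only [derivative_bernoulli_add_one]
    push_cast
    linear_combination (Polynomial.bernoulli i * Polynomial.bernoulli (j + 1) -
      Polynomial.bernoulli (i + 1) * Polynomial.bernoulli j) * hinv
  have hlast : derivative (C ((n : ℚ) + 1)⁻¹ * (Polynomial.bernoulli (n + 1) *
      Polynomial.bernoulli (n + 1 - (n + 1)) - Polynomial.bernoulli (n + 1))) = 0 := by simp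
  have htel := sum_range_sub' (fun i => Polynomial.bernoulli i * Polynomial.bernoulli (n - i)) n
  rw [mikiSum, sum_range_succ, derivative_add, derivative_sum, hlast, sum_congr rfl hterm,
    sum_add_distrib, htel, ← mul_sum, mikiSum]
  simp

theorem derivative_bernoulliConv (a : ℕ → ℚ) (n : ℕ) :
    derivative (bernoulliConv a (n + 1)) = (n + 1) * bernoulliConv a n := by
  rw [bernoulliConv, sum_range_succ, derivative_add, derivative_sum, bernoulliConv, mul_sum]
  have hlast : derivative (C ((n + 1).choose (n + 1) * a (n + 1)) *
      Polynomial.bernoulli (n + 1 - (n + 1))) = 0 := by simp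
  rw [hlast, add_zero]
  refine sum_congr rfl fun k hk => ?_
  have hkn : k ≤ n := mem_range_succ_iff.1 hk
  have hchoose : (n.choose k : ℚ[X]) * (n + 1) = (n + 1).choose k * ((n - k : ℕ) + 1) := by
    have h := Nat.choose_mul_succ_eq n k
    rw [Nat.succ_sub hkn] at h
    exact_mod_cast h
  rw [Nat.succ_sub hkn, derivative_C_mul, derivative_bernoulli_add_one]
  simp only [C_mul, map_natCast]
  linear_combination -C (a k) * Polynomial.bernoulli (n - k) * hchoose

theorem bernoulli_eval_one_eq_ite (n : ℕ) :
    (Polynomial.bernoulli n).eval 1 = _root_.bernoulli n + if n = 1 then 1 else 0 := by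
  have h := bernoulli_eval_one_add n 0
  rw [add_zero, bernoulli_eval_zero] at h
  rw [h]
  rcases n with _ | _ | n <;> simp

theorem mikiSum_eval_one_sub (n : ℕ) :
    (mikiSum (n + 1)).eval 1 - (mikiSum (n + 1)).eval 0 = (n + 1) * bernoulliDiv n := by
  simp only [mikiSum, eval_finsetSum, eval_mul, eval_C, eval_sub, bernoulli_eval_one_eq_ite,
    bernoulli_eval_zero, ← sum_sub_distrib]
  rcases n with _ | _ | n
  · simp [bernoulliDiv]
  · norm_num [sum_range_succ, bernoulliDiv]
  · rw [sum_range_succ, sum_range_succ, sum_range_succ', sum_eq_zero fun i hi => ?_]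
    · simp only [bernoulliDiv]
      simp only [CharP.cast_eq_zero, zero_add, inv_one, _root_.bernoulli_one, ↓reduceIte,
        add_tsub_cancel_right, Nat.add_eq_right, Nat.add_eq_zero_iff, one_ne_zero, and_false,
        add_zero, and_self, one_mul, sub_sub_sub_cancel_right, Nat.cast_add, Nat.cast_one,
        add_tsub_cancel_left, Nat.cast_ofNat, OfNat.ofNat_ne_zero, tsub_self,
        _root_.bernoulli_zero, zero_ne_one, mul_one, sub_self, mul_zero, Order.lt_two_iff,
        add_le_iff_nonpos_left, nonpos_iff_eq_zero]
      field_simp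
      ring
    · have := mem_range.1 hi
      simp [show n + 1 - i ≠ 1 by omega]

theorem bernoulliConv_eval_one_sub (a : ℕ → ℚ) (n : ℕ) :
    (bernoulliConv a (n + 1)).eval 1 - (bernoulliConv a (n + 1)).eval 0 = (n + 1) * a n := by
  simp only [bernoulliConv, eval_finsetSum, eval_mul, eval_C, bernoulli_eval_one_eq_ite,
    bernoulli_eval_zero, ← sum_sub_distrib]
  rw [sum_range_succ, sum_range_succ, sum_eq_zero fun k hk => ?_]
  · simp only [Nat.choose_succ_self_right, Nat.cast_add, Nat.cast_one, add_tsub_cancel_left,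
      _root_.bernoulli_one, ↓reduceIte, zero_add, Nat.choose_self, one_mul, tsub_self,
      _root_.bernoulli_zero, zero_ne_one, add_zero, mul_one, sub_self]
    ring
  · have := mem_range.1 hk
    simp [show n + 1 - k ≠ 1 by omega]

theorem mikiSum_eq_bernoulliConv (n : ℕ) : mikiSum n = bernoulliConv bernoulliDiv n := by
  rw [← sub_eq_zero]
  refine eq_zero_of_derivative_of_eval_one_eq
    (P := fun n => mikiSum n - bernoulliConv bernoulliDiv n) (fun n => ?_) (fun n => ?_) ?_ n
  · rw [derivative_sub, derivative_mikiSum, derivative_bernoulliConv, mul_sub]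
  · rw [eval_sub, eval_sub]
    linear_combination mikiSum_eval_one_sub n - bernoulliConv_eval_one_sub bernoulliDiv n
  · simp [mikiSum, bernoulliConv, bernoulliDiv]

theorem sum_bernoulli_mul_sub_harm_mul (s : ℕ) (x : ℚ) :
    ∑ k ∈ Icc 1 (s - 1), ((Polynomial.bernoulli k).eval x / k) *
        (Polynomial.bernoulli (s - k)).eval x - harm (s - 1) * (Polynomial.bernoulli s).eval x =
      (bernoulliConv bernoulliDiv s).eval x := by
  rw [← mikiSum_eq_bernoulliConv, harm, sum_mul, ← sum_sub_distrib, mikiSum, eval_finsetSum]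
  rcases s with _ | s
  · simp
  have hlast : eval x (C ((s : ℚ) + 1)⁻¹ * (Polynomial.bernoulli (s + 1) *
      Polynomial.bernoulli (s + 1 - (s + 1)) - Polynomial.bernoulli (s + 1))) = 0 := by simp
  rw [sum_range_succ, hlast, add_zero, Nat.add_sub_cancel, ← Ico_add_one_right_eq_Icc,
    sum_Ico_eq_sum_range, Nat.add_sub_cancel]
  refine sum_congr rfl fun k _ => ?_
  rw [add_comm 1 k, eval_mul, eval_sub, eval_mul, eval_C]
  push_cast
  ring

end MikiGessel

section FleckUnit

open Polynomial

/-- The integral polynomial `((1 + X)^p - 1 - X^p) / p`; modulo `p` it is the truncated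
logarithm `∑_{0 < k < p} (-1)^(k-1) X^k / k`. -/
noncomputable def truncLog (p : ℕ) : ℤ[X] := ∑ k ∈ Ico 1 p, C ((p.choose k / p : ℕ) : ℤ) * X ^ k

variable {p : ℕ}

theorem natCast_mul_truncLog (hp : p.Prime) :
    (p : ℤ[X]) * truncLog p = (1 + X) ^ p - 1 - X ^ p := by
  have hterm (k : ℕ) (hk : k ∈ Ico 1 p) :
      (p : ℤ[X]) * (C ((p.choose k / p : ℕ) : ℤ) * X ^ k) = X ^ k * ((p.choose k : ℕ) : ℤ[X]) := by
    rw [mem_Ico] at hk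
    rw [map_natCast, ← mul_assoc, ← Nat.cast_mul,
      Nat.mul_div_cancel' (hp.dvd_choose_self (by omega) hk.2), mul_comm]
  rw [truncLog, mul_sum, sum_congr rfl hterm, add_comm 1 X, add_pow, range_eq_Ico,
    ← sum_Ico_consecutive _ (Nat.zero_le 1) (by omega : 1 ≤ p + 1),
    sum_Ico_succ_top hp.one_lt.le]
  simp

theorem derivative_truncLog (hp : p.Prime) :
    derivative (truncLog p) = (1 + X) ^ (p - 1) - X ^ (p - 1) := by
  have h := congrArg derivative (natCast_mul_truncLog hp)
  refine mul_left_cancel₀ (Nat.cast_ne_zero.2 hp.ne_zero : (p : ℤ[X]) ≠ 0) ?_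
  simpa [derivative_pow, mul_sub, derivative_mul] using h

theorem coeff_truncLog_zero (p : ℕ) : (truncLog p).coeff 0 = 0 := by
  rw [truncLog, finsetSum_coeff]
  refine sum_eq_zero fun k hk => ?_
  simp [coeff_X_pow, (Nat.one_le_iff_ne_zero.1 (mem_Ico.1 hk).1).symm]

theorem coeff_truncLog_one (hp : p.Prime) : (truncLog p).coeff 1 = 1 := by
  rw [truncLog, finsetSum_coeff, sum_eq_single_of_mem 1 (mem_Ico.2 ⟨le_rfl, hp.one_lt⟩)]
  · simp [Nat.div_self hp.pos]
  · intro k _ hk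
    simp [coeff_X_pow, hk.symm]

variable {R S : Type*} [CommRing R] [CommRing S]

theorem one_add_pow_prime (hp : p.Prime) (y : R) :
    (1 + y) ^ p = 1 + y ^ p + p * aeval y (truncLog p) := by
  have h := congrArg (aeval y) (natCast_mul_truncLog hp)
  simp only [map_mul, map_natCast, map_sub, map_pow, map_add, map_one, aeval_X] at h
  linear_combination -h

/-- Fleck's unit `((x^p - 1) - (x - 1)^p) / (p (x - 1))`, as an integral polynomial in `x`. When
`x ^ p = 1` it measures `(x - 1)^(p-1)` against `-p`. -/
noncomputable def fleckUnit (p : ℕ) (x : R) : R := aeval (x - 1) (truncLog p).divX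

/-- The quotient `(fleckUnit p x - 1) / (x - 1)`, as an integral polynomial in `x`. -/
noncomputable def fleckSlope (p : ℕ) (x : R) : R := aeval (x - 1) (truncLog p).divX.divX

/-- The quotient `(u ^ p - 1) / p` for `u = fleckUnit p x` and `x ^ p = 1`, as an integral
polynomial in `x`. -/
noncomputable def fleckLog (p : ℕ) (x : R) : R :=
  aeval (fleckUnit p x - 1) (truncLog p) - (x - 1) * fleckUnit p x * fleckSlope p x ^ p

theorem map_aeval_int {F : Type*} [FunLike F R S] [RingHomClass F R S] (φ : F) (x : R)
    (f : ℤ[X]) : φ (aeval x f) = aeval (φ x) f :=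
  (aeval_algHom_apply (RingHomClass.toRingHom φ).toIntAlgHom x f).symm

theorem map_fleckUnit {F : Type*} [FunLike F R S] [RingHomClass F R S] (φ : F) (x : R) :
    φ (fleckUnit p x) = fleckUnit p (φ x) := by
  rw [fleckUnit, map_aeval_int, map_sub, map_one, fleckUnit]

theorem map_fleckLog {F : Type*} [FunLike F R S] [RingHomClass F R S] (φ : F) (x : R) :
    φ (fleckLog p x) = fleckLog p (φ x) := by
  simp only [fleckLog, fleckSlope, map_sub, map_mul, map_pow, map_one, map_fleckUnit,
    map_aeval_int]

theorem sub_one_mul_fleckUnit (p : ℕ) (x : R) :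
    (x - 1) * fleckUnit p x = aeval (x - 1) (truncLog p) := by
  conv_rhs => rw [← X_mul_divX_add (truncLog p), coeff_truncLog_zero]
  simp [fleckUnit]

theorem fleckUnit_eq_one_add_mul (hp : p.Prime) (x : R) :
    fleckUnit p x = 1 + (x - 1) * fleckSlope p x := by
  rw [fleckUnit, ← X_mul_divX_add (truncLog p).divX, coeff_divX, coeff_truncLog_one hp]
  simp [fleckSlope, add_comm]

theorem sub_one_pow_prime (hp : p.Prime) {x : R} (hx : x ^ p = 1) :
    (x - 1) ^ p = -p * ((x - 1) * fleckUnit p x) := by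
  have h := one_add_pow_prime hp (x - 1)
  rw [add_sub_cancel, hx, ← sub_one_mul_fleckUnit] at h
  linear_combination -h

theorem one_sub_pow_eq_neg_pow_mul (hp : p.Prime) {x : R} (hx : x ^ p = 1) {e a : ℕ} (ha : 0 < a)
    (heven : Even (e * (p - 1))) :
    (1 - x) ^ (e * (p - 1) + a) = (-p) ^ e * ((1 - x) ^ a * fleckUnit p x ^ e) := by
  have hpow (e : ℕ) :
      (x - 1) ^ (e * (p - 1) + a) = (-p) ^ e * ((x - 1) ^ a * fleckUnit p x ^ e) := by
    induction e with
    | zero => simp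
    | succ e ih =>
      obtain ⟨a, rfl⟩ := Nat.exists_eq_add_one.2 ha
      have hexp : (e + 1) * (p - 1) + (a + 1) = e * (p - 1) + (a + 1) + (p - 1) := by ring
      have hprime : (x - 1) * (x - 1) ^ (p - 1) = -p * ((x - 1) * fleckUnit p x) := by
        rw [mul_pow_sub_one hp.ne_zero, sub_one_pow_prime hp hx]
      rw [hexp, pow_add, ih]
      linear_combination (-p) ^ e * (x - 1) ^ a * fleckUnit p x ^ e * hprime
  have hsign : (1 - x : R) = -1 * (x - 1) := by ring
  rw [hsign, mul_pow, hpow, mul_pow, pow_add, heven.neg_one_pow]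
  ring

theorem fleckUnit_pow_prime (hp : p.Prime) {x : R} (hx : x ^ p = 1) :
    fleckUnit p x ^ p = 1 + p * fleckLog p x := by
  have h := one_add_pow_prime hp (fleckUnit p x - 1)
  have hsub : fleckUnit p x - 1 = (x - 1) * fleckSlope p x := by
    rw [fleckUnit_eq_one_add_mul hp, add_sub_cancel_left]
  have hpow : (fleckUnit p x - 1) ^ p =
      -p * ((x - 1) * fleckUnit p x) * fleckSlope p x ^ p := by
    rw [hsub, mul_pow, sub_one_pow_prime hp hx]
  rw [add_sub_cancel, hpow] at h
  rw [h, fleckLog]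
  ring

theorem dvd_mul_choose {d t j : ℕ} (ht : d ∣ t) (hj : 0 < j) : d ∣ j * t.choose j := by
  obtain ⟨k, rfl⟩ := Nat.exists_eq_add_one.2 hj
  cases t with
  | zero => simp
  | succ t => exact mul_comm (k + 1) _ ▸ Nat.add_one_mul_choose_eq t k ▸ ht.mul_right _

theorem pow_add_two_dvd_pow_mul_choose (hp : p.Prime) (hp3 : 3 ≤ p) {v t j : ℕ} (ht : p ^ v ∣ t)
    (hj : 2 ≤ j) : p ^ (v + 2) ∣ p ^ j * t.choose j := by
  obtain ⟨i, c, hc, hjc⟩ := Nat.exists_eq_pow_mul_and_not_dvd (by omega : j ≠ 0) p hp.ne_one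
  have hvi : p ^ v ∣ p ^ i * t.choose j := by
    refine (((hp.coprime_iff_not_dvd.2 hc).pow_left v).dvd_mul_left).1 ?_
    rw [← mul_assoc, mul_comm c, ← hjc]
    exact dvd_mul_choose ht (by omega)
  have hi : i + 2 ≤ j := by
    cases i with
    | zero => exact hj
    | succ i =>
      have hbern : ∀ k, k + 3 ≤ 3 ^ (k + 1) := by
        intro k
        induction k with
        | zero => norm_num
        | succ k ih => rw [pow_succ]; omega
      have hcpos : 0 < c := Nat.pos_of_ne_zero (by rintro rfl; exact hc (dvd_zero p))
      exact (hbern i).trans <|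
        (Nat.pow_le_pow_left hp3 _).trans (hjc ▸ Nat.le_mul_of_pos_right _ hcpos)
  calc p ^ (v + 2) = p ^ v * p ^ 2 := pow_add _ _ _
    _ ∣ p ^ i * t.choose j * p ^ 2 := mul_dvd_mul_right hvi _
    _ = p ^ (i + 2) * t.choose j := by ring
    _ ∣ p ^ j * t.choose j := mul_dvd_mul_right (pow_dvd_pow _ hi) _

theorem pow_add_two_dvd_one_add_mul_pow_sub (hp : p.Prime) (hp3 : 3 ≤ p) {v t : ℕ}
    (ht : p ^ v ∣ t) (y : R) : (p : R) ^ (v + 2) ∣ (1 + p * y) ^ t - (1 + p * t * y) := by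
  have hexp : (1 + p * y) ^ t - (1 + p * t * y) =
      ∑ j ∈ range t, (p ^ (j + 2) * t.choose (j + 2) : ℕ) * y ^ (j + 2) := by
    have hsum : (1 + p * y) ^ t = ∑ j ∈ range (t + 2), (p * y) ^ j * t.choose j := by
      rw [sum_range_succ, Nat.choose_succ_self, Nat.cast_zero, mul_zero, add_zero, add_comm 1,
        add_pow]
      simp only [one_pow, mul_one]
    rw [hsum, sum_range_succ', sum_range_succ']
    push_cast
    simp only [pow_zero, pow_one, Nat.choose_zero_right,
      Nat.choose_one_right, mul_pow]
    rw [Nat.cast_one, add_assoc, mul_one, add_sub_assoc]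
    have hlow : p * y * t + 1 - (1 + p * t * y) = 0 := by ring
    rw [hlow, add_zero]
    exact sum_congr rfl fun j _ => by ring
  rw [hexp]
  refine dvd_sum fun j _ => Dvd.dvd.mul_right ?_ _
  exact_mod_cast Nat.cast_dvd_cast (pow_add_two_dvd_pow_mul_choose hp hp3 ht (by omega))

theorem fleckLog_two (x : R) : fleckLog 2 x = 0 := by
  have htrunc : truncLog 2 = X := by simp [truncLog]
  have hdiv : (X : ℤ[X]).divX = 1 := by ext; simp [coeff_X, coeff_one]
  simp [fleckLog, fleckUnit, fleckSlope, htrunc, hdiv]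

theorem pow_add_two_dvd_fleckUnit_pow_sub (hp : p.Prime) {x : R} (hx : x ^ p = 1) {v t : ℕ}
    (ht : p ^ v ∣ t) :
    (p : R) ^ (v + 2) ∣ fleckUnit p x ^ (p * t) - (1 + p * t * fleckLog p x) := by
  rw [pow_mul, fleckUnit_pow_prime hp hx]
  rcases hp.two_le.eq_or_lt with rfl | hp3
  · simp [fleckLog_two]
  · exact pow_add_two_dvd_one_add_mul_pow_sub hp hp3 ht _

section Derivation

variable {A : Type*} [CommRing A] [Algebra A R] [Fact p.Prime] [CharP R p]

theorem one_add_mul_derivation_aeval_truncLog (D : Derivation A R R) (y : R) :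
    (1 + y) * D (aeval y (truncLog p)) = D y - y ^ (p - 1) * D y := by
  have hp : p.Prime := Fact.out
  have hchain := (D.restrictScalars ℤ).map_aeval (truncLog p) y
  rw [derivative_truncLog hp] at hchain
  simp only [Derivation.restrictScalars_apply, map_sub, map_pow, map_add, map_one, aeval_X,
    smul_eq_mul] at hchain
  have hfrob : (1 + y) * (1 + y) ^ (p - 1) = 1 + y * y ^ (p - 1) := by
    rw [mul_pow_sub_one hp.ne_zero, mul_pow_sub_one hp.ne_zero, add_pow_char, one_pow]
  rw [hchain]
  linear_combination D y * hfrob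

theorem mul_derivation_sub_one_mul_fleckUnit (D : Derivation A R R) (x : R) :
    x * D ((x - 1) * fleckUnit p x) = D x - (x - 1) ^ (p - 1) * D x := by
  have h := one_add_mul_derivation_aeval_truncLog (p := p) D (x - 1)
  rwa [add_sub_cancel, ← sub_one_mul_fleckUnit, map_sub, Derivation.map_one_eq_zero,
    sub_zero] at h

theorem fleckUnit_mul_derivation_fleckLog_add (D : Derivation A R R) (x : R) :
    fleckUnit p x * D (fleckLog p x + (x - 1) * fleckUnit p x * fleckSlope p x ^ p) =
      D (fleckUnit p x) - (fleckUnit p x - 1) ^ (p - 1) * D (fleckUnit p x) := by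
  have h := one_add_mul_derivation_aeval_truncLog (p := p) D (fleckUnit p x - 1)
  rw [fleckLog, sub_add_cancel]
  rwa [add_sub_cancel, map_sub, Derivation.map_one_eq_zero, sub_zero] at h

end Derivation

end FleckUnit

section ResidueSum

open Polynomial

/-- The functional on `ℤ[X]` adding up the coefficients whose index is congruent to `r` modulo
`p`: the coefficient at `r` of the image in the group ring of `ℤ / p`. -/
noncomputable def residueSum (p : ℕ) (r : ℤ) : ℤ[X] →ₗ[ℤ] ℤ :=
  Finsupp.lapply (r : ZMod p) ∘ₗ (AddMonoidAlgebra.coeffLinearEquiv ℤ).toLinearMap ∘ₗ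
    (aeval (AddMonoidAlgebra.single (1 : ZMod p) (1 : ℤ))).toLinearMap

variable {p : ℕ}

theorem residueSum_eq_coeff_aeval (r : ℤ) (f : ℤ[X]) :
    residueSum p r f = (aeval (AddMonoidAlgebra.single (1 : ZMod p) (1 : ℤ)) f).coeff r := rfl

theorem single_one_pow_eq_one (p : ℕ) : AddMonoidAlgebra.single (1 : ZMod p) (1 : ℤ) ^ p = 1 := by
  rw [AddMonoidAlgebra.single_pow, one_pow, nsmul_one, ZMod.natCast_self,
    AddMonoidAlgebra.one_def]

theorem residueSum_C_mul_X_pow (r a : ℤ) (k : ℕ) :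
    residueSum p r (C a * X ^ k) = if (k : ZMod p) = r then a else 0 := by
  rw [← smul_eq_C_mul, map_smul, residueSum_eq_coeff_aeval, map_pow, aeval_X,
    AddMonoidAlgebra.single_pow, AddMonoidAlgebra.coeff_single, one_pow, nsmul_one,
    Finsupp.single_apply, smul_eq_mul, mul_ite, mul_one, mul_zero]

theorem Cp_eq_residueSum (n : ℕ) (r : ℤ) : Cp p n r = residueSum p r ((1 - X) ^ n) := by
  have hmod (k : ℕ) : ((k : ℤ) - r) % p = 0 ↔ (k : ZMod p) = r := by
    rw [← Int.dvd_iff_emod_eq_zero, ← ZMod.intCast_zmod_eq_zero_iff_dvd, Int.cast_sub,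
      Int.cast_natCast, sub_eq_zero]
  have hexp : (1 - X : ℤ[X]) ^ n =
      ∑ k ∈ range (n + 1), C ((-1) ^ k * (n.choose k : ℤ)) * X ^ k := by
    rw [sub_eq_neg_add, add_pow]
    refine sum_congr rfl fun k _ => ?_
    rw [neg_pow, one_pow, C_mul, C_pow, C_neg, C_1, map_natCast]
    ring
  rw [hexp, map_sum, Cp, Int.cast_sum]
  simp only [residueSum_C_mul_X_pow, hmod, Int.cast_ite, Int.cast_mul, Int.cast_pow,
    Int.cast_neg, Int.cast_one, Int.cast_natCast, Int.cast_zero]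

theorem Fp_eq_zpow_mul_Cp {a e : ℕ} (hp : 2 ≤ p) (r : ℤ) (ha : 0 < a) (hap : a < p) :
    Fp p (e * (p - 1) + a) r = (-(p : ℚ)) ^ (-(e : ℤ)) * Cp p (e * (p - 1) + a) r := by
  have hpos : (0 : ℤ) < (p : ℤ) - 1 := by omega
  have hdiv : Int.fdiv (((e * (p - 1) + a : ℕ) : ℤ) - 1) ((p : ℤ) - 1) = e := by
    rw [Int.fdiv_eq_ediv_of_nonneg _ hpos.le]
    push_cast [Nat.cast_sub (one_le_two.trans hp)]
    rw [add_sub_assoc, add_comm, Int.add_mul_ediv_right _ _ hpos.ne',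
      Int.ediv_eq_zero_of_lt (by omega) (by omega), zero_add]
  rw [Fp, hdiv, if_neg (by omega), add_zero]

theorem Fp_eq_residueSum {a e : ℕ} (hp : p.Prime) (r : ℤ) (ha : 0 < a) (hap : a < p)
    (heven : Even (e * (p - 1))) :
    Fp p (e * (p - 1) + a) r = residueSum p r ((1 - X) ^ a * fleckUnit p X ^ e) := by
  have hfactor : residueSum p r ((1 - X) ^ (e * (p - 1) + a)) =
      (-p) ^ e * residueSum p r ((1 - X) ^ a * fleckUnit p X ^ e) := by
    rw [← smul_eq_mul ((-(p : ℤ)) ^ e), ← map_smul, residueSum_eq_coeff_aeval,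
      residueSum_eq_coeff_aeval]
    simp only [smul_eq_C_mul, map_mul, map_pow, map_sub, map_one, map_neg, map_natCast, aeval_X,
      map_fleckUnit, one_sub_pow_eq_neg_pow_mul hp (single_one_pow_eq_one p) ha heven]
  rw [Fp_eq_zpow_mul_Cp hp.two_le r ha hap, Cp_eq_residueSum, hfactor]
  push_cast
  rw [← mul_assoc, zpow_neg, zpow_natCast,
    inv_mul_cancel₀ (pow_ne_zero _ (neg_ne_zero.2 (Nat.cast_ne_zero.2 hp.ne_zero))), one_mul]

theorem exists_residueSum_fleckUnit_pow_eq (hp : p.Prime) (r : ℤ) (g : ℤ[X]) (e : ℕ) {v t : ℕ}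
    (ht : p ^ v ∣ t) :
    ∃ l : ℤ, residueSum p r (g * fleckUnit p X ^ (e + p * t)) =
      residueSum p r (g * fleckUnit p X ^ e) +
        p * t * residueSum p r (g * fleckUnit p X ^ e * fleckLog p X) + p ^ (v + 2) * l := by
  set x := AddMonoidAlgebra.single (1 : ZMod p) (1 : ℤ) with hx
  obtain ⟨k, hk⟩ := pow_add_two_dvd_fleckUnit_pow_sub hp (single_one_pow_eq_one p) ht
  rw [← hx] at hk
  have hexp : aeval x (g * fleckUnit p X ^ (e + p * t)) =
      aeval x (g * fleckUnit p X ^ e) +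
        (p * t : ℤ) • aeval x (g * fleckUnit p X ^ e * fleckLog p X) +
        (p ^ (v + 2) : ℤ) • (aeval x (g * fleckUnit p X ^ e) * k) := by
    simp only [map_mul, map_pow, aeval_X, map_fleckUnit, map_fleckLog, zsmul_eq_mul]
    rw [pow_add, sub_eq_iff_eq_add.1 hk]
    push_cast
    ring
  refine ⟨(aeval x (g * fleckUnit p X ^ e) * k).coeff r, ?_⟩
  simp only [residueSum_eq_coeff_aeval, ← hx, hexp, AddMonoidAlgebra.coeff_add,
    AddMonoidAlgebra.coeff_smul, Finsupp.add_apply, Finsupp.smul_apply, smul_eq_mul]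

end ResidueSum

section Reduction

variable {p : ℕ} [Fact p.Prime]

/-- `IsReduction p q a` says that the rational `q` is `p`-integral with residue `a` modulo `p`. -/
def IsReduction (p : ℕ) [Fact p.Prime] (q : ℚ) (a : ZMod p) : Prop :=
  ∃ z : ℤ_[p], (z : ℚ_[p]) = q ∧ PadicInt.toZMod z = a

namespace IsReduction

variable {x y : ℚ} {a b : ZMod p}

theorem intCast (n : ℤ) : IsReduction p n n := ⟨n, by simp, by simp⟩

theorem natCast (n : ℕ) : IsReduction p n n := ⟨n, by simp, by simp⟩

theorem zero : IsReduction p 0 0 := ⟨0, by simp, by simp⟩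

theorem one : IsReduction p 1 1 := ⟨1, by simp, by simp⟩

theorem add (hx : IsReduction p x a) (hy : IsReduction p y b) :
    IsReduction p (x + y) (a + b) := by
  obtain ⟨z, hz, rfl⟩ := hx
  obtain ⟨w, hw, rfl⟩ := hy
  exact ⟨z + w, by push_cast [hz, hw]; rfl, map_add _ _ _⟩

theorem neg (hx : IsReduction p x a) : IsReduction p (-x) (-a) := by
  obtain ⟨z, hz, rfl⟩ := hx
  exact ⟨-z, by push_cast [hz]; rfl, map_neg _ _⟩

theorem sub (hx : IsReduction p x a) (hy : IsReduction p y b) :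
    IsReduction p (x - y) (a - b) := by
  simpa only [sub_eq_add_neg] using hx.add hy.neg

theorem mul (hx : IsReduction p x a) (hy : IsReduction p y b) :
    IsReduction p (x * y) (a * b) := by
  obtain ⟨z, hz, rfl⟩ := hx
  obtain ⟨w, hw, rfl⟩ := hy
  exact ⟨z * w, by push_cast [hz, hw]; rfl, map_mul _ _ _⟩

theorem pow (hx : IsReduction p x a) (n : ℕ) : IsReduction p (x ^ n) (a ^ n) := by
  obtain ⟨z, hz, rfl⟩ := hx
  exact ⟨z ^ n, by push_cast [hz]; rfl, map_pow _ _ _⟩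

theorem sum {ι : Type*} {s : Finset ι} {f : ι → ℚ} {g : ι → ZMod p}
    (h : ∀ i ∈ s, IsReduction p (f i) (g i)) : IsReduction p (∑ i ∈ s, f i) (∑ i ∈ s, g i) := by
  choose! z hz hzg using h
  exact ⟨∑ i ∈ s, z i, by
    rw [PadicInt.coe_sum, Rat.cast_sum]
    exact sum_congr rfl hz, by rw [map_sum]; exact sum_congr rfl hzg⟩

theorem inv (hx : IsReduction p x a) (ha : a ≠ 0) : IsReduction p x⁻¹ a⁻¹ := by
  obtain ⟨z, hz, rfl⟩ := hx
  obtain ⟨u, rfl⟩ : IsUnit z := by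
    rw [← IsLocalRing.notMem_maximalIdeal, ← PadicInt.ker_toZMod, RingHom.mem_ker]
    exact ha
  have hinv : (u : ℤ_[p]) * (u⁻¹ : ℤ_[p]ˣ) = 1 := u.mul_inv
  refine ⟨(u⁻¹ : ℤ_[p]ˣ), ?_, ?_⟩
  · rw [Rat.cast_inv, ← hz]
    exact eq_inv_of_mul_eq_one_right (by exact_mod_cast congrArg (Subtype.val) hinv)
  · exact eq_inv_of_mul_eq_one_right (by rw [← map_mul, hinv, map_one])

theorem unique (h : IsReduction p x a) (h' : IsReduction p x b) : a = b := by
  obtain ⟨z, hz, rfl⟩ := h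
  obtain ⟨w, hw, rfl⟩ := h'
  rw [Subtype.ext (hz.trans hw.symm)]

theorem ne_zero (hx : IsReduction p x a) (ha : a ≠ 0) : x ≠ 0 := by
  rintro rfl
  exact ha (hx.unique zero)

theorem modCong (hx : IsReduction p x a) (hy : IsReduction p y a) : modCong p 1 x y := by
  refine or_iff_not_imp_left.2 fun hxy => ?_
  obtain ⟨z, hz, hz0⟩ := hx.sub hy
  rw [sub_self, ← RingHom.mem_ker, PadicInt.ker_toZMod, PadicInt.maximalIdeal_eq_span_p,
    ← pow_one (p : ℤ_[p]), PadicInt.mem_span_pow_iff_le_valuation _ ?_] at hz0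
  · rw [← Padic.valuation_ratCast (p := p), ← hz, PadicInt.valuation_coe]
    exact_mod_cast hz0
  · rintro rfl
    rw [PadicInt.coe_zero, eq_comm, Rat.cast_eq_zero] at hz
    exact hxy (sub_eq_zero.1 hz)

end IsReduction

open PowerSeries

/-- The first `N` coefficients of the rational power series `f` are `p`-integral and reduce to
those of `g`. -/
def ReducesBelow (p : ℕ) [Fact p.Prime] (N : ℕ) (f : ℚ⟦X⟧) (g : (ZMod p)⟦X⟧) : Prop :=
  ∀ j < N, IsReduction p (coeff j f) (coeff j g)

namespace ReducesBelow

variable {M N : ℕ} {f f' : ℚ⟦X⟧} {g g' : (ZMod p)⟦X⟧}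

theorem mono (h : ReducesBelow p N f g) (hMN : M ≤ N) : ReducesBelow p M f g :=
  fun j hj => h j (hj.trans_le hMN)

theorem mul (h : ReducesBelow p N f g) (h' : ReducesBelow p N f' g') :
    ReducesBelow p N (f * f') (g * g') := by
  intro j hj
  rw [coeff_mul, coeff_mul]
  refine IsReduction.sum fun i hi => (h _ ?_).mul (h' _ ?_)
  · exact (HasAntidiagonal.mem_antidiagonal.1 hi ▸ Nat.le_add_right _ _).trans_lt hj
  · exact (HasAntidiagonal.mem_antidiagonal.1 hi ▸ Nat.le_add_left _ _).trans_lt hj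

theorem congr_right (h : ReducesBelow p N f g) (hg : X ^ N ∣ g' - g) : ReducesBelow p N f g' := by
  intro j hj
  have hcoeff := X_pow_dvd_iff.1 hg j hj
  rw [map_sub, sub_eq_zero] at hcoeff
  exact hcoeff ▸ h j hj

theorem one : ReducesBelow p N 1 1 := by
  intro j _
  rw [coeff_one, coeff_one]
  split_ifs
  exacts [.one, .zero]

theorem pow (h : ReducesBelow p N f g) (n : ℕ) : ReducesBelow p N (f ^ n) (g ^ n) := by
  induction n with
  | zero => simpa only [pow_zero] using one
  | succ n ih => simpa only [pow_succ] using ih.mul h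

theorem of_mul_left (h : ReducesBelow p N f g) (hg : constantCoeff g ≠ 0)
    (hmul : ReducesBelow p N (f * f') (g * g')) : ReducesBelow p N f' g' := by
  rw [← coeff_zero_eq_constantCoeff_apply] at hg
  have hsolve {K : Type} [Field K] {u v : K⟦X⟧} (hu : coeff 0 u ≠ 0) (j : ℕ) :
      coeff j v = (coeff 0 u)⁻¹ *
        (coeff j (u * v) - ∑ i ∈ range j, coeff (i + 1) u * coeff (j - (i + 1)) v) := by
    rw [coeff_mul, Nat.sum_antidiagonal_eq_sum_range_succ_mk, sum_range_succ', Nat.sub_zero,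
      add_sub_cancel_left, inv_mul_cancel_left₀ hu]
  intro j
  induction j using Nat.strong_induction_on with
  | _ j ih =>
    intro hj
    have h0 := h 0 (Nat.zero_lt_of_lt hj)
    rw [hsolve (h0.ne_zero hg) j, hsolve hg j]
    refine (h0.inv hg).mul ((hmul j hj).sub (IsReduction.sum fun i hi => ?_))
    have hij := mem_range.1 hi
    exact (h _ (by omega)).mul (ih _ (by omega) (by omega))

end ReducesBelow

end Reduction

section TruncatedExponential

open PowerSeries

variable {p : ℕ} [Fact p.Prime]

theorem natCast_zmod_ne_zero {k : ℕ} (h0 : 0 < k) (hk : k < p) : (k : ZMod p) ≠ 0 := by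
  rw [Ne, ZMod.natCast_eq_zero_iff]
  exact Nat.not_dvd_of_pos_of_lt h0 hk

theorem natCast_factorial_zmod_ne_zero {k : ℕ} (hk : k < p) : (k.factorial : ZMod p) ≠ 0 := by
  rw [Ne, ZMod.natCast_eq_zero_iff, (Fact.out : p.Prime).dvd_factorial]
  omega

theorem X_pow_dvd_derivative {R : Type*} [CommSemiring R] {f : R⟦X⟧} {N : ℕ} (h : X ^ N ∣ f) :
    X ^ (N - 1) ∣ d⁄dX R f := by
  refine X_pow_dvd_iff.2 fun m hm => ?_
  rw [coeff_derivative, X_pow_dvd_iff.1 h _ (Nat.add_lt_of_lt_sub hm), zero_mul]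

theorem X_pow_dvd_of_derivative {f : (ZMod p)⟦X⟧} (h0 : constantCoeff f = 0) {N : ℕ}
    (hN : N ≤ p) (h : X ^ (N - 1) ∣ d⁄dX (ZMod p) f) : X ^ N ∣ f := by
  refine X_pow_dvd_iff.2 fun m hm => ?_
  cases m with
  | zero => exact (coeff_zero_eq_constantCoeff_apply f).trans h0
  | succ m =>
    have hcoeff := X_pow_dvd_iff.1 h m (Nat.lt_sub_of_add_lt hm)
    rw [coeff_derivative] at hcoeff
    exact (mul_eq_zero.1 hcoeff).resolve_right
      (by exact_mod_cast natCast_zmod_ne_zero m.succ_pos (hm.trans_le hN))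

instance charPZModPowerSeries : CharP (ZMod p)⟦X⟧ p :=
  charP_of_injective_ringHom (C_injective (R := ZMod p)) p

theorem X_pow_dvd_pow_sub_C (f : (ZMod p)⟦X⟧) : X ^ p ∣ f ^ p - C (constantCoeff f) := by
  have h : X ∣ f - C (constantCoeff f) := by simp [X_dvd_iff]
  have hp := pow_dvd_pow_of_dvd h p
  rwa [sub_pow_char, ← map_pow, ZMod.pow_card] at hp

/-- The exponential series modulo `p`, truncated below degree `p`. -/
noncomputable def truncExp (p : ℕ) [Fact p.Prime] : (ZMod p)⟦X⟧ :=
  PowerSeries.mk fun n => (n.factorial : ZMod p)⁻¹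

theorem coeff_truncExp (n : ℕ) : coeff n (truncExp p) = (n.factorial : ZMod p)⁻¹ := coeff_mk _ _

theorem constantCoeff_truncExp : constantCoeff (truncExp p) = 1 := by
  rw [← coeff_zero_eq_constantCoeff_apply, coeff_truncExp, Nat.factorial_zero, Nat.cast_one,
    inv_one]

theorem X_pow_dvd_derivative_truncExp_sub :
    X ^ (p - 1) ∣ d⁄dX (ZMod p) (truncExp p) - truncExp p := by
  refine X_pow_dvd_iff.2 fun m hm => ?_
  have hm1 : ((m : ZMod p) + 1) ≠ 0 := by
    exact_mod_cast natCast_zmod_ne_zero m.succ_pos (p := p) (by omega)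
  rw [map_sub, coeff_derivative, coeff_truncExp, coeff_truncExp, Nat.factorial_succ, Nat.cast_mul,
    Nat.cast_add_one, mul_inv, mul_right_comm, inv_mul_cancel₀ hm1, one_mul, sub_self]

theorem reducesBelow_exp : ReducesBelow p p (exp ℚ) (truncExp p) := by
  intro j hj
  rw [coeff_exp, coeff_truncExp, map_div₀, map_one, one_div]
  exact (IsReduction.natCast _).inv (natCast_factorial_zmod_ne_zero hj)

theorem coeff_truncExp_pow (m : ℕ) {j : ℕ} (hj : j < p) :
    coeff j (truncExp p ^ m) = (m : ZMod p) ^ j * (j.factorial : ZMod p)⁻¹ := by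
  have hpow := reducesBelow_exp.pow m j hj
  rw [exp_pow_eq_rescale_exp, coeff_rescale] at hpow
  refine hpow.unique (((IsReduction.natCast m).pow j).mul ?_)
  rw [← coeff_truncExp]
  exact reducesBelow_exp j hj

end TruncatedExponential

section FleckSeries

open PowerSeries

variable {p : ℕ} [Fact p.Prime]

theorem X_pow_dvd_truncExp_sub_one_mul_fleckUnit_sub_X :
    X ^ p ∣ (truncExp p - 1) * fleckUnit p (truncExp p) - X := by
  have hpow : (X : (ZMod p)⟦X⟧) ^ (p - 1) ∣ (truncExp p - 1) ^ (p - 1) :=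
    pow_dvd_pow_of_dvd (X_dvd_iff.2 (by simp [constantCoeff_truncExp])) _
  have hunit : IsUnit (truncExp p) := by
    rw [isUnit_iff_constantCoeff, constantCoeff_truncExp]
    exact isUnit_one
  have hder : X ^ (p - 1) ∣
      d⁄dX (ZMod p) ((truncExp p - 1) * fleckUnit p (truncExp p) - X) := by
    rw [← hunit.dvd_mul_left, map_sub, mul_sub, mul_derivation_sub_one_mul_fleckUnit,
      derivative_X, mul_one, sub_right_comm]
    exact dvd_sub X_pow_dvd_derivative_truncExp_sub (hpow.mul_right _)
  exact X_pow_dvd_of_derivative (by simp [constantCoeff_truncExp]) le_rfl hder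

theorem constantCoeff_fleckUnit : constantCoeff (fleckUnit p (truncExp p)) = 1 := by
  rw [fleckUnit_eq_one_add_mul Fact.out]
  simp [constantCoeff_truncExp]

theorem coeff_one_fleckUnit :
    coeff 1 (fleckUnit p (truncExp p)) = constantCoeff (fleckSlope p (truncExp p)) := by
  rw [fleckUnit_eq_one_add_mul Fact.out, map_add, coeff_one_mul]
  simp [coeff_truncExp, coeff_one, constantCoeff_truncExp]

theorem X_pow_dvd_fleckUnit_pow_sub_one : X ^ p ∣ fleckUnit p (truncExp p) ^ p - 1 := by
  simpa only [constantCoeff_fleckUnit, map_one] using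
    X_pow_dvd_pow_sub_C (fleckUnit p (truncExp p))

theorem X_pow_dvd_derivative_fleckSlope_pow_sub :
    X ^ (p - 1) ∣ d⁄dX (ZMod p) ((truncExp p - 1) * fleckUnit p (truncExp p) *
      fleckSlope p (truncExp p) ^ p) - C (coeff 1 (fleckUnit p (truncExp p))) := by
  rw [coeff_one_fleckUnit]
  have hmul := dvd_add
    ((X_pow_dvd_truncExp_sub_one_mul_fleckUnit_sub_X (p := p)).mul_right
      (fleckSlope p (truncExp p) ^ p))
    ((X_pow_dvd_pow_sub_C (fleckSlope p (truncExp p))).mul_left X)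
  rw [sub_mul, mul_sub, sub_add_sub_cancel] at hmul
  simpa using X_pow_dvd_derivative hmul

theorem X_pow_dvd_X_mul_derivative_fleckLog_add_sub :
    X ^ (p - 1) ∣ X * d⁄dX (ZMod p) (fleckLog p (truncExp p) + (truncExp p - 1) *
      fleckUnit p (truncExp p) * fleckSlope p (truncExp p) ^ p) -
      (1 - fleckUnit p (truncExp p) - X) := by
  have hT := X_pow_dvd_derivative_truncExp_sub (p := p)
  have hX := X_pow_dvd_truncExp_sub_one_mul_fleckUnit_sub_X (p := p)
  have hdX := X_pow_dvd_derivative hX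
  have hu : X ^ (p - 1) ∣ (fleckUnit p (truncExp p) - 1) ^ (p - 1) :=
    pow_dvd_pow_of_dvd (X_dvd_iff.2 (by simp [constantCoeff_fleckUnit])) _
  have hlog := fleckUnit_mul_derivation_fleckLog_add (p := p) (d⁄dX (ZMod p)) (truncExp p)
  replace hX := (pow_dvd_pow X (Nat.sub_le p 1)).trans hX
  simp only [map_sub, Derivation.leibniz, smul_eq_mul, Derivation.map_one_eq_zero, derivative_X,
    sub_zero] at hdX
  generalize d⁄dX (ZMod p) (_ + _) = y at *
  generalize fleckUnit p (truncExp p) = u at *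
  obtain ⟨a, ha⟩ := hT
  obtain ⟨b, hb⟩ := hX
  obtain ⟨c, hc⟩ := hdX
  obtain ⟨d, hd⟩ := hu
  refine ⟨- b * (y + 1) - (truncExp p - 1) * d * d⁄dX (ZMod p) u + c - a * u, ?_⟩
  linear_combination (-y - 1) * hb + (truncExp p - 1) * hlog - (truncExp p - 1) *
    d⁄dX (ZMod p) u * hd + hc - u * ha

theorem X_pow_dvd_X_mul_derivative_fleckLog_sub :
    X ^ (p - 1) ∣ X * d⁄dX (ZMod p) (fleckLog p (truncExp p)) -
      (1 - fleckUnit p (truncExp p) - C (1 + coeff 1 (fleckUnit p (truncExp p))) * X) := by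
  have h := dvd_sub (X_pow_dvd_X_mul_derivative_fleckLog_add_sub (p := p))
    ((X_pow_dvd_derivative_fleckSlope_pow_sub (p := p)).mul_left X)
  convert h using 1
  rw [map_add (d⁄dX (ZMod p)), map_add C, map_one]
  ring

theorem constantCoeff_fleckLog : constantCoeff (fleckLog p (truncExp p)) = 0 := by
  rw [map_fleckLog, constantCoeff_truncExp, fleckLog, fleckUnit_eq_one_add_mul Fact.out]
  simp [← Polynomial.coeff_zero_eq_aeval_zero', coeff_truncLog_zero]

theorem natCast_mul_coeff_fleckLog {k : ℕ} (hk : k < p - 1) :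
    (k : ZMod p) * coeff k (fleckLog p (truncExp p)) =
      coeff k (1 - fleckUnit p (truncExp p) -
        C (1 + coeff 1 (fleckUnit p (truncExp p))) * X) := by
  have h := X_pow_dvd_iff.1 (X_pow_dvd_X_mul_derivative_fleckLog_sub (p := p)) k hk
  rw [map_sub, sub_eq_zero] at h
  rw [← h]
  cases k with
  | zero => simp
  | succ k => rw [coeff_succ_X_mul, coeff_derivative, Nat.cast_succ, mul_comm]

end FleckSeries

section BernoulliSeries

open PowerSeries

/-- The exponential generating function of the values of the Bernoulli polynomials at `t`. -/
noncomputable def bernoulliSeries (t : ℚ) : ℚ⟦X⟧ :=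
  PowerSeries.mk fun n => (Polynomial.bernoulli n).eval t / n.factorial

/-- The exponential generating function of `bernoulliDiv`. -/
noncomputable def bernoulliDivSeries : ℚ⟦X⟧ :=
  PowerSeries.mk fun n => bernoulliDiv n / n.factorial

theorem shift_exp_mul_bernoulliSeries (t : ℚ) :
    (PowerSeries.mk fun n => coeff (n + 1) (exp ℚ)) * bernoulliSeries t = rescale t (exp ℚ) := by
  have hgen := Polynomial.bernoulli_generating_function (A := ℚ) t
  have hseries : (PowerSeries.mk fun n =>
      Polynomial.aeval t ((1 / n.factorial : ℚ) • Polynomial.bernoulli n)) = bernoulliSeries t := by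
    ext n
    rw [bernoulliSeries, coeff_mk, coeff_mk, map_smul, Polynomial.coe_aeval_eq_eval, smul_eq_mul,
      one_div_mul_eq_div]
  have hshift := sub_const_eq_X_mul_shift (exp ℚ)
  rw [constantCoeff_exp, map_one] at hshift
  rw [hseries, hshift, mul_left_comm] at hgen
  rw [mul_comm, X_mul_cancel hgen]

theorem coeff_bernoulliSeries_mul_bernoulliDivSeries (t : ℚ) (n : ℕ) :
    coeff n (bernoulliSeries t * bernoulliDivSeries) =
      (bernoulliConv bernoulliDiv n).eval t / n.factorial := by
  rw [mul_comm, coeff_mul, Nat.sum_antidiagonal_eq_sum_range_succ_mk, bernoulliConv,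
    Polynomial.eval_finsetSum, sum_div]
  refine sum_congr rfl fun k hk => ?_
  rw [bernoulliDivSeries, bernoulliSeries, coeff_mk, coeff_mk, Polynomial.eval_mul,
    Polynomial.eval_C, Nat.cast_choose ℚ (Nat.lt_succ_iff.1 (mem_range.1 hk))]
  have hn : (n.factorial : ℚ) ≠ 0 := by positivity
  field_simp

variable {p : ℕ} [Fact p.Prime]

theorem reducesBelow_rescale_exp {t : ℚ} {c : ℕ} (ht : IsReduction p t c) :
    ReducesBelow p p (rescale t (exp ℚ)) (truncExp p ^ c) := by
  intro j hj
  rw [coeff_rescale, coeff_truncExp_pow c hj, ← coeff_truncExp]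
  exact (ht.pow j).mul (reducesBelow_exp j hj)

theorem X_pow_dvd_shift_truncExp_mul_fleckUnit_sub_one :
    X ^ (p - 1) ∣ (PowerSeries.mk fun n => coeff (n + 1) (truncExp p)) *
      fleckUnit p (truncExp p) - 1 := by
  have h := X_pow_dvd_truncExp_sub_one_mul_fleckUnit_sub_X (p := p)
  have hshift := sub_const_eq_X_mul_shift (truncExp p)
  rw [constantCoeff_truncExp, map_one] at hshift
  rw [hshift, mul_assoc, ← mul_sub_one, ← mul_pow_sub_one (Fact.out : p.Prime).ne_zero] at h
  exact (mul_dvd_mul_iff_left X_ne_zero).1 h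

theorem reducesBelow_bernoulliSeries {t : ℚ} {c : ℕ} (ht : IsReduction p t c) :
    ReducesBelow p (p - 1) (bernoulliSeries t) (truncExp p ^ c * fleckUnit p (truncExp p)) := by
  have hshift : ReducesBelow p (p - 1) (PowerSeries.mk fun n => coeff (n + 1) (exp ℚ))
      (PowerSeries.mk fun n => coeff (n + 1) (truncExp p)) := by
    intro j hj
    rw [coeff_mk, coeff_mk]
    exact reducesBelow_exp _ (Nat.add_lt_of_lt_sub hj)
  refine hshift.of_mul_left (by simp [← coeff_zero_eq_constantCoeff_apply, coeff_truncExp]) ?_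
  rw [shift_exp_mul_bernoulliSeries]
  refine ((reducesBelow_rescale_exp ht).mono (Nat.sub_le p 1)).congr_right ?_
  rw [mul_left_comm, ← mul_sub_one]
  exact X_pow_dvd_shift_truncExp_mul_fleckUnit_sub_one.mul_left _

theorem isReduction_coeff_fleckUnit {k : ℕ} (hk : k < p - 1) :
    IsReduction p (_root_.bernoulli k / k.factorial) (coeff k (fleckUnit p (truncExp p))) := by
  have h := reducesBelow_bernoulliSeries (c := 0) (by simpa using IsReduction.zero (p := p)) k hk
  rwa [bernoulliSeries, coeff_mk, Polynomial.bernoulli_eval_zero, pow_zero, one_mul] at h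

theorem reducesBelow_bernoulliDivSeries :
    ReducesBelow p (p - 1) bernoulliDivSeries (-fleckLog p (truncExp p)) := by
  intro k hk
  have hz := natCast_mul_coeff_fleckLog hk
  have hu := isReduction_coeff_fleckUnit hk
  rw [bernoulliDivSeries, coeff_mk, map_neg]
  rcases k with - | k
  · simpa [bernoulliDiv, constantCoeff_fleckLog] using IsReduction.zero
  rcases k with - | k
  · have hz1 : coeff 1 (fleckLog p (truncExp p)) = -coeff 1 (fleckUnit p (truncExp p)) -
        (1 + coeff 1 (fleckUnit p (truncExp p))) := by simpa [coeff_one] using hz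
    convert (hu.add hu).add IsReduction.one using 1
    · norm_num [bernoulliDiv, _root_.bernoulli_one]
    · rw [zero_add, hz1]
      ring
  · have hk0 : ((k + 2 : ℕ) : ZMod p) ≠ 0 := natCast_zmod_ne_zero (by omega) (by omega)
    convert ((IsReduction.natCast (k + 2)).inv hk0).mul hu using 1
    · rw [bernoulliDiv, if_neg (by omega)]
      field_simp
    · rw [eq_inv_mul_iff_mul_eq₀ hk0, mul_neg, hz]
      simp [coeff_one]

theorem isReduction_bernoulliConv_div_factorial {t : ℚ} {c s : ℕ} (ht : IsReduction p t c)
    (hs : s < p - 1) :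
    IsReduction p ((bernoulliConv bernoulliDiv s).eval t / s.factorial)
      (-coeff s (truncExp p ^ c * fleckUnit p (truncExp p) * fleckLog p (truncExp p))) := by
  rw [← coeff_bernoulliSeries_mul_bernoulliDivSeries, ← map_neg, ← mul_neg]
  exact (reducesBelow_bernoulliSeries ht).mul reducesBelow_bernoulliDivSeries s hs

end BernoulliSeries

section ResidueSumCast

open PowerSeries

variable {p : ℕ} [Fact p.Prime]

/-- The substitution of `truncExp p` for the variable of an integral polynomial. -/
noncomputable def truncExpSubst (p : ℕ) [Fact p.Prime] : Polynomial ℤ →+* (ZMod p)⟦X⟧ :=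
  Polynomial.eval₂RingHom (Int.castRingHom _) (truncExp p)

theorem truncExpSubst_X : truncExpSubst p Polynomial.X = truncExp p := Polynomial.eval₂_X _ _

theorem truncExpSubst_C (a : ℤ) : truncExpSubst p (Polynomial.C a) = C (a : ZMod p) := by
  rw [truncExpSubst, Polynomial.coe_eval₂RingHom, Polynomial.eval₂_C, eq_intCast, map_intCast]

-- By Fermat and Wilson, the coefficient of `X ^ (p - 1)` in `truncExp p ^ k` is `0` or `-1`
-- according to whether `p` divides `k`.
theorem residueSum_cast (r : ℤ) {c : ℕ} (hc : (c : ZMod p) = -r) (f : Polynomial ℤ) :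
    (residueSum p r f : ZMod p) =
      (f.eval 1 : ℤ) + coeff (p - 1) (truncExp p ^ c * truncExpSubst p f) := by
  have hp := (Fact.out : p.Prime).two_le
  induction f using Polynomial.induction_on' with
  | add f g hf hg =>
    rw [map_add, map_add, mul_add, map_add, Polynomial.eval_add, Int.cast_add, Int.cast_add, hf, hg,
      add_add_add_comm]
  | monomial k a =>
    have hsubst : truncExp p ^ c * truncExpSubst p (Polynomial.C a * Polynomial.X ^ k) =
        C (a : ZMod p) * truncExp p ^ (k + c) := by
      rw [map_mul, map_pow, truncExpSubst_X, truncExpSubst_C, mul_left_comm, pow_add,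
        mul_comm (_ ^ c)]
    have hiff : (k : ZMod p) = r ↔ ((k + c : ℕ) : ZMod p) = 0 := by
      rw [Nat.cast_add, hc, ← sub_eq_add_neg, sub_eq_zero]
    rw [← Polynomial.C_mul_X_pow_eq_monomial, residueSum_C_mul_X_pow, hsubst, coeff_C_mul,
      coeff_truncExp_pow _ (by omega), ZMod.wilsons_lemma]
    by_cases h : ((k + c : ℕ) : ZMod p) = 0
    · rw [if_pos (hiff.2 h), h, zero_pow (by omega)]
      simp
    · rw [if_neg (mt hiff.1 h), ZMod.pow_card_sub_one_eq_one h]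
      simp [inv_neg]

theorem X_pow_dvd_one_sub_truncExp_pow_mul_fleckUnit_pow_sub {a e q : ℕ}
    (he : e + p = a + p * q + 1) :
    X ^ p ∣ (1 - truncExp p) ^ a * fleckUnit p (truncExp p) ^ e -
      (-X) ^ a * fleckUnit p (truncExp p) := by
  have hX := X_pow_dvd_truncExp_sub_one_mul_fleckUnit_sub_X (p := p)
  have hpow := X_pow_dvd_fleckUnit_pow_sub_one (p := p)
  rw [← Ideal.mem_span_singleton, ← Ideal.Quotient.eq] at hX hpow ⊢
  simp only [map_mul, map_pow, map_sub, map_neg, map_one] at hX hpow ⊢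
  generalize Ideal.Quotient.mk (Ideal.span {X ^ p}) (fleckUnit p (truncExp p)) = u at *
  generalize Ideal.Quotient.mk (Ideal.span {X ^ p}) (truncExp p) = T at *
  rw [← hX]
  calc (1 - T) ^ a * u ^ e = (1 - T) ^ a * u ^ (e + p) := by rw [pow_add, hpow, mul_one]
    _ = (1 - T) ^ a * (u ^ a * u) := by
      rw [he, pow_succ, pow_add, pow_mul, hpow, one_pow, mul_one]
    _ = (-((T - 1) * u)) ^ a * u := by rw [← mul_assoc, ← mul_pow]; congr 2; ring

theorem coeff_one_sub_truncExp_pow_mul (f : (ZMod p)⟦X⟧) {a s e q : ℕ} (has : a + s = p - 1)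
    (he : e + p = a + p * q + 1) :
    coeff (p - 1) (f * ((1 - truncExp p) ^ a * fleckUnit p (truncExp p) ^ e)) =
      (-1) ^ a * coeff s (f * fleckUnit p (truncExp p)) := by
  have hp := (Fact.out : p.Prime).pos
  have hdvd := (X_pow_dvd_one_sub_truncExp_pow_mul_fleckUnit_pow_sub he).mul_left f
  have hcoeff := X_pow_dvd_iff.1 hdvd (p - 1) (Nat.sub_lt hp one_pos)
  rw [mul_sub, map_sub, sub_eq_zero] at hcoeff
  have hfactor : f * ((-X) ^ a * fleckUnit p (truncExp p)) =
      X ^ a * (C ((-1) ^ a) * (f * fleckUnit p (truncExp p))) := by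
    rw [neg_pow, map_pow, map_neg, map_one]
    ring
  rw [hcoeff, hfactor, ← has, add_comm a s, coeff_X_pow_mul, coeff_C_mul]

theorem residueSum_fleckLog_cast (r : ℤ) {c a s e q : ℕ} (hc : (c : ZMod p) = -r) (ha : 0 < a)
    (has : a + s = p - 1) (he : e + p = a + p * q + 1) :
    (residueSum p r ((1 - Polynomial.X) ^ a * fleckUnit p Polynomial.X ^ e *
      fleckLog p Polynomial.X) : ZMod p) =
      (-1) ^ a * coeff s (truncExp p ^ c * fleckUnit p (truncExp p) * fleckLog p (truncExp p)) := by
  rw [residueSum_cast r hc]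
  simp only [map_mul, map_pow, map_sub, map_one, map_fleckUnit, map_fleckLog, truncExpSubst_X]
  rw [mul_comm _ (fleckLog p (truncExp p)), ← mul_assoc, coeff_one_sub_truncExp_pow_mul _ has he,
    mul_right_comm (_ ^ c)]
  simp [ha.ne']

end ResidueSumCast

section FleckCongruence

open Polynomial

variable {p n a s q : ℕ}

theorem nUp_add_two_le (hp : 2 ≤ p) (n : ℕ) : nUp p n + 2 ≤ p := by
  have h := Int.emod_lt_of_pos (-(n : ℤ)) (by omega : (0 : ℤ) < (p : ℤ) - 1)
  rw [nUp]
  omega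

theorem exists_add_nUp_eq (hp : 2 ≤ p) (n : ℕ) : ∃ q, n + nUp p n = q * (p - 1) := by
  have h := Int.emod_nonneg (-(n : ℤ)) (by omega : (p : ℤ) - 1 ≠ 0)
  have hdvd : ((p - 1 : ℕ) : ℤ) ∣ ((n + nUp p n : ℕ) : ℤ) := by
    rw [Nat.cast_add, nUp, Int.toNat_of_nonneg h, Nat.cast_sub (by omega), Nat.cast_one,
      Int.emod_def]
    exact ⟨-(-(n : ℤ) / ((p : ℤ) - 1)), by ring⟩
  obtain ⟨q, hq⟩ := Int.natCast_dvd_natCast.1 hdvd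
  exact ⟨q, hq.trans (mul_comm _ _)⟩

theorem nUp_congr {m : ℕ} (h : (m : ℤ) ≡ n [ZMOD ((p : ℤ) - 1)]) : nUp p m = nUp p n := by
  rw [nUp, nUp, h.neg]

theorem Fp_mul_add_sub_one (hp : p.Prime) (r : ℤ) (ha : 0 < a) (has : a + s = p - 1)
    (hq : n + s = q * (p - 1)) :
    Fp p (p * n + p - 1) r = residueSum p r ((1 - X) ^ a * fleckUnit p X ^ (n + q)) := by
  have heven : Even ((n + q) * (p - 1)) := by
    rcases hp.eq_two_or_odd' with rfl | hodd
    · obtain rfl : q = n := by omega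
      exact (Even.add_self q).mul_right _
    · exact (hodd.tsub_odd odd_one).mul_left _
  have hexp : p * n + p - 1 = (n + q) * (p - 1) + a := by
    obtain ⟨d, rfl⟩ := Nat.exists_eq_add_of_le' hp.one_le
    rw [Nat.add_sub_cancel] at has hq ⊢
    rw [← add_assoc, Nat.add_sub_cancel]
    linarith
  rw [hexp, Fp_eq_residueSum hp r ha (by omega) heven]

theorem isReduction_Fp_sub_div [Fact p.Prime] (r : ℤ) (ha : 0 < a) (has : a + s = p - 1)
    (hq : n + s = q * (p - 1)) {t : ℕ} (ht : t ≠ 0) :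
    IsReduction p ((Fp p (p * (n + (p - 1) * t) + p - 1) r - Fp p (p * n + p - 1) r) /
        (p * (((n + (p - 1) * t : ℕ) : ℚ) - n)))
      (-residueSum p r ((1 - X) ^ a * fleckUnit p X ^ (n + q) * fleckLog p X)) := by
  have hp : p.Prime := Fact.out
  obtain ⟨v, b, hb, rfl⟩ := Nat.exists_eq_pow_mul_and_not_dvd ht p hp.ne_one
  set t := p ^ v * b with htb
  set ρ := residueSum p r ((1 - X) ^ a * fleckUnit p X ^ (n + q) * fleckLog p X)
  obtain ⟨l, hl⟩ := exists_residueSum_fleckUnit_pow_eq hp r ((1 - X) ^ a) (n + q)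
    (Dvd.intro b htb.symm)
  have hqt : n + (p - 1) * t + s = (q + t) * (p - 1) := by
    rw [add_right_comm, hq]
    ring
  have hexp : n + (p - 1) * t + (q + t) = n + q + p * t := by
    obtain ⟨d, hd⟩ := Nat.exists_eq_add_of_le' hp.one_le
    rw [hd, Nat.add_sub_cancel]
    ring
  have hp0 : (p : ℚ) ≠ 0 := Nat.cast_ne_zero.2 hp.ne_zero
  have hp1 : (p : ℚ) - 1 ≠ 0 := sub_ne_zero.2 (Nat.cast_ne_one.2 hp.ne_one)
  have hb0 : (b : ℚ) ≠ 0 := Nat.cast_ne_zero.2 fun h => hb (h ▸ dvd_zero p)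
  have hbp : (b : ZMod p) ≠ 0 := by rwa [Ne, ZMod.natCast_eq_zero_iff]
  rw [Fp_mul_add_sub_one hp r ha has hq, Fp_mul_add_sub_one hp r ha has hqt, hexp, hl]
  have hp1z : (p : ZMod p) - 1 ≠ 0 := by simp
  convert ((IsReduction.intCast ρ).add (((IsReduction.natCast p).mul (IsReduction.intCast l)).mul
    ((IsReduction.natCast b).inv hbp))).mul (((IsReduction.natCast p).sub .one).inv hp1z) using 1
  · rw [htb]
    push_cast [Nat.cast_sub hp.one_le]
    field_simp
    ring
  · simp [inv_neg]

theorem modCong_Fp_sub_div (hp : p.Prime) (r : ℤ) (n : ℕ) {t : ℕ} (ht : t ≠ 0) :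
    modCong p 1 ((Fp p (p * (n + (p - 1) * t) + p - 1) r - Fp p (p * n + p - 1) r) /
        (p * (((n + (p - 1) * t : ℕ) : ℚ) - n)))
      ((-1) ^ nUp p n / (nUp p n).factorial *
        (bernoulliConv bernoulliDiv (nUp p n)).eval (-(r : ℚ))) := by
  have : Fact p.Prime := ⟨hp⟩
  have hs := nUp_add_two_le hp.two_le n
  obtain ⟨q, hq⟩ := exists_add_nUp_eq hp.two_le n
  generalize nUp p n = s at hs hq ⊢
  obtain ⟨c, hc⟩ := ZMod.natCast_zmod_surjective (-r : ZMod p)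
  have hr : IsReduction p (-(r : ℚ)) c := hc ▸ (IsReduction.intCast r).neg
  obtain ⟨a, ha, has⟩ : ∃ a, 0 < a ∧ a + s = p - 1 := ⟨p - 1 - s, by omega, by omega⟩
  have he : n + q + p = a + p * q + 1 := by
    obtain ⟨d, hd⟩ := Nat.exists_eq_add_of_le' hp.one_le
    rw [hd, Nat.add_sub_cancel] at has hq
    rw [hd]
    linarith
  have hsign : (-1 : ZMod p) ^ a = (-1) ^ s := by
    have hneg : (-1 : ZMod p) ≠ 0 := neg_ne_zero.2 one_ne_zero
    refine mul_right_cancel₀ (pow_ne_zero s hneg) ?_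
    rw [← pow_add, has, ZMod.pow_card_sub_one_eq_one hneg, ← mul_pow, neg_one_mul, neg_neg,
      one_pow]
  have hleft := isReduction_Fp_sub_div r ha has hq ht
  have hright := ((IsReduction.one (p := p)).neg.pow s).mul
    (isReduction_bernoulliConv_div_factorial (s := s) hr (by omega))
  rw [residueSum_fleckLog_cast r hc ha has he, hsign, ← mul_neg] at hleft
  rw [div_mul_eq_mul_div₀, mul_div_assoc]
  exact hleft.modCong hright

end FleckCongruence

theorem stmt4 (p : ℕ) (hp : p.Prime) (r : ℤ) (m n : ℕ) (hmn : m ≠ n)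
    (h : (m:ℤ) ≡ (n:ℤ) [ZMOD ((p:ℤ) - 1)]) :
    modCong p 1 ((Fp p (p*m+p-1) r - Fp p (p*n+p-1) r) / ((p:ℚ) * ((m:ℚ) - (n:ℚ))))
      ((-1:ℚ)^(nUp p n) / ((nUp p n).factorial : ℚ) *
        (∑ k ∈ Finset.Icc 1 (nUp p n - 1),
            ((Polynomial.bernoulli k).eval (-(r:ℚ)) / (k:ℚ)) *
              (Polynomial.bernoulli (nUp p n - k)).eval (-(r:ℚ))
          - harm (nUp p n - 1) * (Polynomial.bernoulli (nUp p n)).eval (-(r:ℚ)))) := by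
  rw [sum_bernoulli_mul_sub_harm_mul]
  wlog hlt : n < m generalizing m n
  · have hsymm := this n m hmn.symm h.symm (hmn.lt_or_gt.resolve_right hlt)
    rwa [nUp_congr h, ← neg_sub (Fp p (p * m + p - 1) r), ← neg_sub (m : ℚ), mul_neg,
      neg_div_neg_eq] at hsymm
  obtain ⟨t, ht⟩ := (Nat.modEq_iff_dvd' hlt.le).1 ((Int.natCast_modEq_iff).1
    (by rw [Nat.cast_sub hp.one_le]; exact_mod_cast h.symm))
  obtain rfl : m = n + (p - 1) * t := by omega
  exact modCong_Fp_sub_div hp r n (right_ne_zero_of_mul (Nat.pos_of_lt_add_right hlt).ne')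
end

section
/- Let p be an odd prime and let n be a positive integer not divisible by p−1. Then F_p(n,0)/n is a p-adic integer; that is, the p-adic valuation of F_p(n,0) is at least the p-adic valuation of n. -/
open Finset

/-!
In the group ring `ℤ_[p][T] / (T ^ p - 1)` the constant coefficient of `(1 - T) ^ n` is `C_p(n, 0)`.
Let `ω` be the Teichmüller character and `g = ∑ a, ω(a)⁻¹ T ^ a`. The substitution `T ↦ T ^ b` fixes
constant coefficients and multiplies `g` by `ω(b)`, so the constant coefficient of `g ^ n` vanishes
unless `ω ^ n = 1`, that is, unless `p - 1 ∣ n`.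

Since `∑ a, ω(a)⁻¹ = 0` and `∑ a, ω(a)⁻¹ a ≡ -1` modulo `p`, a Taylor expansion at `T = 1` gives
`g = (1 - T) u` with `u ≡ 1` modulo `1 - T`. Moreover `p (1 - T)` divides `(1 - T) ^ p`. Therefore
`p ^ ⌊(n - 1) / (p - 1)⌋` divides `(1 - T) ^ n`, and `u ^ n ≡ 1` modulo `p ^ a` whenever
`p ^ a ∣ n`. Consequently `(1 - T) ^ n ≡ g ^ n` modulo `p ^ (⌊(n - 1) / (p - 1)⌋ + a)`, and
comparing constant coefficients gives the claim.
-/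

section Divisibility

lemma pow_mul_dvd_pow_mul_add_one {M : Type*} [CommMonoid M] {q x : M} {k : ℕ}
    (hx : q * x ∣ x ^ (k + 1)) (j : ℕ) : q ^ j * x ∣ x ^ (k * j + 1) := by
  induction j with
  | zero => simp
  | succ j ih =>
    calc q ^ (j + 1) * x = q ^ j * (q * x) := by rw [pow_succ, mul_assoc]
      _ ∣ q ^ j * x ^ (k + 1) := mul_dvd_mul_left _ hx
      _ = q ^ j * x * x ^ k := by rw [pow_succ', mul_assoc]
      _ ∣ x ^ (k * j + 1) * x ^ k := mul_dvd_mul_right ih _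
      _ = x ^ (k * (j + 1) + 1) := by rw [← pow_add, mul_add_one, add_right_comm]

lemma pow_div_dvd_pow {M : Type*} [CommMonoid M] {q x : M} {k : ℕ} (hx : q * x ∣ x ^ k) (n : ℕ) :
    q ^ ((n - 1) / (k - 1)) ∣ x ^ n := by
  obtain _ | k := k
  · simp
  obtain _ | m := n
  · simp
  calc q ^ (m / k) ∣ q ^ (m / k) * x := dvd_mul_right _ _
    _ ∣ x ^ (k * (m / k) + 1) := pow_mul_dvd_pow_mul_add_one hx _
    _ ∣ x ^ (m + 1) := pow_dvd_pow x (by gcongr; exact Nat.mul_div_le m k)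

variable {A : Type*} [CommRing A] {p : ℕ}

lemma natCast_mul_one_sub_dvd_one_sub_pow (hp : p.Prime) {T : A} (hT : T ^ p = 1) :
    (p : A) * (1 - T) ∣ (1 - T) ^ p := by
  obtain ⟨r, hr⟩ := exists_add_pow_prime_eq hp (1 - T) T
  rw [sub_add_cancel, one_pow, hT] at hr
  exact ⟨-(T * r), by linear_combination -hr⟩

lemma natCast_mul_mul_dvd_pow_sub_one (hp : p.Prime) {x c u : A} (hx : (p : A) * x ∣ x ^ p)
    (hu : c * x ∣ u - 1) : p * (c * x) ∣ u ^ p - 1 := by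
  obtain ⟨z, hz⟩ := hu
  obtain ⟨h, hh⟩ := hx
  obtain ⟨r, hr⟩ := exists_add_pow_prime_eq hp 1 (u - 1)
  rw [add_sub_cancel, one_pow, hz, mul_pow, mul_pow, hh, ← mul_pow_sub_one hp.ne_zero c] at hr
  exact ⟨c ^ (p - 1) * h * z ^ p + z * r, by linear_combination hr⟩

lemma natCast_pow_mul_dvd_pow_sub_one (hp : p.Prime) {x u : A} (hx : (p : A) * x ∣ x ^ p)
    (hu : x ∣ u - 1) (a : ℕ) : (p : A) ^ a * x ∣ u ^ p ^ a - 1 := by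
  induction a with
  | zero => simpa using hu
  | succ a ih =>
    rw [pow_succ p, pow_mul, pow_succ', mul_assoc]
    exact natCast_mul_mul_dvd_pow_sub_one hp hx ih

lemma natCast_pow_dvd_pow_sub_one (hp : p.Prime) {x u : A} (hx : (p : A) * x ∣ x ^ p)
    (hu : x ∣ u - 1) {a m : ℕ} (ha : p ^ a ∣ m) : (p : A) ^ a ∣ u ^ m - 1 := by
  obtain ⟨k, rfl⟩ := ha
  rw [pow_mul]
  calc (p : A) ^ a ∣ (p : A) ^ a * x := dvd_mul_right _ _
    _ ∣ u ^ p ^ a - 1 := natCast_pow_mul_dvd_pow_sub_one hp hx hu a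
    _ ∣ (u ^ p ^ a) ^ k - 1 := sub_one_dvd_pow_sub_one _ _

lemma exists_pow_eq_one_sub_add_sq (T : A) (m : ℕ) :
    ∃ s : A, T ^ m = 1 - m * (1 - T) + (1 - T) ^ 2 * s := by
  obtain ⟨s, hs⟩ := Polynomial.powAddExpansion 1 (T - 1) m
  rw [add_sub_cancel, one_pow, one_pow] at hs
  exact ⟨s, by linear_combination hs⟩

lemma one_sub_sq_dvd_natCast_mul_one_sub {T : A} {m : ℕ} (hT : T ^ m = 1) :
    (1 - T) ^ 2 ∣ (m : A) * (1 - T) := by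
  obtain ⟨s, hs⟩ := exists_pow_eq_one_sub_add_sq T m
  exact ⟨s, by linear_combination hs - hT⟩

lemma exists_sum_mul_pow_eq_one_sub_mul {ι : Type*} (s : Finset ι) {c : ι → A} {e : ι → ℕ}
    {T : A} (hT : T ^ p = 1) (hc : ∑ i ∈ s, c i = 0) (hce : (p : A) ∣ ∑ i ∈ s, c i * e i + 1) :
    ∃ u : A, 1 - T ∣ u - 1 ∧ ∑ i ∈ s, c i * T ^ e i = (1 - T) * u := by
  choose t ht using exists_pow_eq_one_sub_add_sq T
  obtain ⟨α, hα⟩ := hce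
  obtain ⟨δ, hδ⟩ := one_sub_sq_dvd_natCast_mul_one_sub hT
  have expand : ∑ i ∈ s, c i * T ^ e i = ∑ i ∈ s, c i - (1 - T) * ∑ i ∈ s, c i * e i
      + (1 - T) ^ 2 * ∑ i ∈ s, c i * t (e i) := by
    rw [mul_sum, mul_sum, ← sum_sub_distrib, ← sum_add_distrib]
    refine sum_congr rfl fun i _ => ?_
    rw [ht (e i)]
    ring
  refine ⟨1 + (1 - T) * (∑ i ∈ s, c i * t (e i) - δ * α), by simp, ?_⟩
  linear_combination expand + hc - (1 - T) * hα - α * hδ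

end Divisibility

section GroupRing

/-- The universal additive character `a ↦ T ^ a` of `G`, valued in the group ring of `G`; for
`G = ZMod p` its value at `1` is the variable `T` of `R[T] / (T ^ p - 1)`. -/
noncomputable def universalAddChar (R G : Type*) [Semiring R] [AddMonoid G] :
    AddChar G (AddMonoidAlgebra R G) :=
  AddChar.toMonoidHomEquiv.symm (AddMonoidAlgebra.of R G)

/-- The Gauss sum `∑ a, χ a T ^ a` of a multiplicative character against the universal additive
character, so that it lives in the group ring of `F` and specializes to every Gauss sum of `χ`. -/
noncomputable def universalGaussSum {R F : Type*} [CommRing R] [CommRing F] [Fintype F]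
    (χ : MulChar F R) : AddMonoidAlgebra R F :=
  gaussSum (χ.ringHomComp (algebraMap R _)) (universalAddChar R F)

section Semiring

variable {R : Type*} [Semiring R]

lemma universalAddChar_apply {G : Type*} [AddMonoid G] (a : G) :
    universalAddChar R G a = AddMonoidAlgebra.single a 1 := rfl

lemma universalAddChar_eq_pow_val {p : ℕ} [NeZero p] (a : ZMod p) :
    universalAddChar R (ZMod p) a = universalAddChar R (ZMod p) 1 ^ a.val := by
  rw [← AddChar.map_nsmul_eq_pow, nsmul_one, ZMod.natCast_zmod_val]

lemma universalAddChar_one_pow_self (p : ℕ) : universalAddChar R (ZMod p) 1 ^ p = 1 := by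
  rw [← AddChar.map_nsmul_eq_pow, nsmul_one, CharP.cast_eq_zero, AddChar.map_zero_eq_one]

lemma natCast_dvd_coeff {G : Type*} [AddMonoid G] {m : ℕ} {x : AddMonoidAlgebra R G}
    (hx : (m : AddMonoidAlgebra R G) ∣ x) (g : G) : (m : R) ∣ x.coeff g := by
  obtain ⟨y, rfl⟩ := hx
  rw [← nsmul_eq_mul, AddMonoidAlgebra.coeff_smul_apply, nsmul_eq_mul]
  exact dvd_mul_right _ _

end Semiring

lemma coeff_zero_mapDomainAlgHom {R G H : Type*} [CommSemiring R] [AddMonoid G] [AddMonoid H]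
    {f : G →+ H} (hf : Function.Injective f) (x : AddMonoidAlgebra R G) :
    (AddMonoidAlgebra.mapDomainAlgHom R R f x).coeff 0 = x.coeff 0 := by
  simpa using Finsupp.mapDomain_apply hf x.coeff 0

variable {R : Type*} [CommRing R] {F : Type*} [CommRing F] [Fintype F]

lemma mapDomainAlgHom_universalGaussSum (χ : MulChar F R) (b : F) :
    AddMonoidAlgebra.mapDomainAlgHom R R (AddMonoidHom.mulLeft b) (universalGaussSum χ) =
      gaussSum (χ.ringHomComp (algebraMap R _)) (AddChar.mulShift (universalAddChar R F) b) := by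
  simp [universalGaussSum, gaussSum, universalAddChar_apply]

lemma smul_mapDomainAlgHom_universalGaussSum (χ : MulChar F R) (b : Fˣ) :
    χ b • AddMonoidAlgebra.mapDomainAlgHom R R (AddMonoidHom.mulLeft (b : F))
      (universalGaussSum χ) = universalGaussSum χ := by
  rw [mapDomainAlgHom_universalGaussSum, Algebra.smul_def]
  exact gaussSum_mulShift _ _ b

lemma coeff_zero_universalGaussSum_pow [IsDomain R] {χ : MulChar F R} {n : ℕ} (hχ : χ ^ n ≠ 1) :
    (universalGaussSum χ ^ n).coeff 0 = 0 := by
  obtain ⟨b, hb⟩ := MulChar.ne_one_iff.1 hχ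
  rw [MulChar.pow_apply_coe] at hb
  let σ := AddMonoidAlgebra.mapDomainAlgHom R R (AddMonoidHom.mulLeft (b : F))
  have hfixed : (universalGaussSum χ ^ n).coeff 0 = χ b ^ n * (universalGaussSum χ ^ n).coeff 0 :=
    calc (universalGaussSum χ ^ n).coeff 0
        = ((χ b • σ (universalGaussSum χ)) ^ n).coeff 0 := by
          rw [smul_mapDomainAlgHom_universalGaussSum]
      _ = χ b ^ n * (σ (universalGaussSum χ ^ n)).coeff 0 := by
          rw [smul_pow, ← map_pow σ, AddMonoidAlgebra.coeff_smul_apply, smul_eq_mul]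
      _ = χ b ^ n * (universalGaussSum χ ^ n).coeff 0 := by
          rw [coeff_zero_mapDomainAlgHom b.isUnit.mul_right_injective]
  by_contra hne
  exact hb ((mul_eq_right₀ hne).1 hfixed.symm)

lemma exists_universalGaussSum_eq_one_sub_mul [IsDomain R] {p : ℕ} [NeZero p]
    {χ : MulChar (ZMod p) R} (hχ : χ ≠ 1) (h : (p : R) ∣ ∑ a, χ a * a.val + 1) :
    ∃ u, 1 - universalAddChar R (ZMod p) 1 ∣ u - 1 ∧
      universalGaussSum χ = (1 - universalAddChar R (ZMod p) 1) * u := by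
  have hsum := congrArg (algebraMap R (AddMonoidAlgebra R (ZMod p)))
    (MulChar.sum_eq_zero_of_ne_one hχ)
  have hdvd := map_dvd (algebraMap R (AddMonoidAlgebra R (ZMod p))) h
  simp only [map_sum, map_add, map_mul, map_natCast, map_zero, map_one] at hsum hdvd
  simpa only [universalGaussSum, gaussSum, MulChar.ringHomComp_apply,
    ← universalAddChar_eq_pow_val]
    using exists_sum_mul_pow_eq_one_sub_mul univ (universalAddChar_one_pow_self p) hsum hdvd

end GroupRing

section Teichmuller

variable (p : ℕ) [Fact p.Prime]

/-- The Teichmüller character, sending a residue class to its multiplicative lift to `ℤ_[p]`. -/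
noncomputable def teichmullerChar : MulChar (ZMod p) ℤ_[p] where
  toMonoidHom := (WittVector.equiv p : _ →* ℤ_[p]).comp (WittVector.teichmuller p)
  map_nonunit' a ha := by
    have : a = 0 := by simpa using ha
    simp [this]

variable {p}

lemma ringHom_padicInt_zmod_eq_toZMod (f : ℤ_[p] →+* ZMod p) : f = PadicInt.toZMod := by
  refine ZMod.ringHom_eq_of_ker_eq _ _ ?_
  rw [PadicInt.ker_toZMod]
  exact IsLocalRing.eq_maximalIdeal
    (RingHom.ker_isMaximal_of_surjective f (ZMod.ringHom_surjective f))

lemma toZMod_wittVector_equiv (x : WittVector p (ZMod p)) :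
    PadicInt.toZMod (WittVector.equiv p x) = WittVector.constantCoeff x := by
  rw [← ringHom_padicInt_zmod_eq_toZMod
    (WittVector.constantCoeff.comp (WittVector.equiv p).symm.toRingHom)]
  simp

lemma toZMod_teichmullerChar (a : ZMod p) : PadicInt.toZMod (teichmullerChar p a) = a :=
  (toZMod_wittVector_equiv (WittVector.teichmuller p a)).trans
    (WittVector.teichmuller_coeff_zero p a)

lemma sub_one_dvd_of_teichmullerChar_pow_eq_one {n : ℕ} (h : teichmullerChar p ^ n = 1) :
    p - 1 ∣ n := by
  rw [← ZMod.card p, ← FiniteField.forall_pow_eq_one_iff (ZMod p)]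
  intro u
  have hu : teichmullerChar p u ^ n = 1 := by
    rw [← MulChar.pow_apply_coe, h, MulChar.one_apply_coe]
  ext
  simpa [toZMod_teichmullerChar] using congrArg PadicInt.toZMod hu

lemma natCast_dvd_iff_toZMod_eq_zero {x : ℤ_[p]} :
    (p : ℤ_[p]) ∣ x ↔ PadicInt.toZMod x = 0 := by
  rw [← RingHom.mem_ker, PadicInt.ker_toZMod, PadicInt.maximalIdeal_eq_span_p,
    Ideal.mem_span_singleton]

lemma natCast_dvd_sum_inv_teichmullerChar_mul_val_add_one :
    (p : ℤ_[p]) ∣ ∑ a, (teichmullerChar p)⁻¹ a * a.val + 1 := by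
  rw [natCast_dvd_iff_toZMod_eq_zero]
  calc PadicInt.toZMod (∑ a, (teichmullerChar p)⁻¹ a * a.val + 1)
      = ∑ a : ZMod p, a⁻¹ * a + 1 := by
        simp only [map_add, map_sum, map_mul, map_one, map_natCast, MulChar.inv_apply',
          toZMod_teichmullerChar, ZMod.natCast_zmod_val]
    _ = ∑ a : ZMod p, (1 : MulChar (ZMod p) (ZMod p)) a + 1 := by
        congr 1
        refine sum_congr rfl fun a _ => ?_
        obtain rfl | ha := eq_or_ne a 0
        · rw [mul_zero, MulChar.map_zero]
        · rw [inv_mul_cancel₀ ha, MulChar.one_apply ha.isUnit]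
    _ = 0 := by
        rw [MulChar.sum_one_eq_card_units, ZMod.card_units, Nat.cast_pred (Fact.out : p.Prime).pos]
        simp

end Teichmuller

section Fleck

/-- The integer value of `Cp p n r`, with the residue `r` taken in `ZMod p`. -/
def fleckSum (p n : ℕ) (r : ZMod p) : ℤ :=
  ∑ k ∈ range (n + 1) with ((k : ℕ) : ZMod p) = r, (-1) ^ k * n.choose k

lemma Cp_eq_fleckSum (p n : ℕ) (r : ℤ) : Cp p n r = fleckSum p n r := by
  rw [Cp, fleckSum, sum_filter]
  push_cast
  refine sum_congr rfl fun k _ => ?_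
  congr 1
  rw [← Int.dvd_iff_emod_eq_zero, ← ZMod.intCast_zmod_eq_zero_iff_dvd]
  simp [sub_eq_zero]

lemma one_sub_universalAddChar_pow {R : Type*} [CommRing R] (p n : ℕ) :
    (1 - universalAddChar R (ZMod p) 1) ^ n = ∑ k ∈ range (n + 1),
      AddMonoidAlgebra.single (k : ZMod p) ((-1) ^ k * n.choose k : R) := by
  rw [sub_eq_neg_add, universalAddChar_apply, ← AddMonoidAlgebra.single_neg, add_pow]
  refine sum_congr rfl fun k _ => ?_
  rw [AddMonoidAlgebra.single_pow, one_pow, mul_one, AddMonoidAlgebra.natCast_def,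
    AddMonoidAlgebra.single_mul_single, nsmul_one, add_zero]

lemma coeff_one_sub_universalAddChar_pow {R : Type*} [CommRing R] (p n : ℕ) (r : ZMod p) :
    ((1 - universalAddChar R (ZMod p) 1) ^ n).coeff r = fleckSum p n r := by
  rw [one_sub_universalAddChar_pow, fleckSum, sum_filter, AddMonoidAlgebra.coeff_sum,
    Finsupp.finsetSum_apply]
  push_cast
  simp only [AddMonoidAlgebra.coeff_single, Finsupp.single_apply]

lemma pow_dvd_fleckSum_zero {p n a : ℕ} (hp : p.Prime) (h : ¬ (p - 1) ∣ n) (ha : p ^ a ∣ n) :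
    (p : ℤ) ^ ((n - 1) / (p - 1) + a) ∣ fleckSum p n 0 := by
  have := Fact.mk hp
  have hω : (teichmullerChar p)⁻¹ ^ n ≠ 1 := by
    rw [inv_pow, inv_ne_one]
    exact mt sub_one_dvd_of_teichmullerChar_pow_eq_one h
  obtain ⟨u, hu, hg⟩ := exists_universalGaussSum_eq_one_sub_mul
    (ne_one_of_map (f := powMonoidHom n) hω) natCast_dvd_sum_inv_teichmullerChar_mul_val_add_one
  set T := universalAddChar ℤ_[p] (ZMod p) 1
  have hT : (p : AddMonoidAlgebra ℤ_[p] (ZMod p)) * (1 - T) ∣ (1 - T) ^ p :=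
    natCast_mul_one_sub_dvd_one_sub_pow hp (universalAddChar_one_pow_self p)
  have hcongr : ((p ^ ((n - 1) / (p - 1) + a) : ℕ) : AddMonoidAlgebra ℤ_[p] (ZMod p)) ∣
      universalGaussSum (teichmullerChar p)⁻¹ ^ n - (1 - T) ^ n := by
    rw [hg, mul_pow, ← mul_sub_one, pow_add, Nat.cast_mul, Nat.cast_pow, Nat.cast_pow]
    exact mul_dvd_mul (pow_div_dvd_pow hT n) (natCast_pow_dvd_pow_sub_one hp hT hu ha)
  have hcoeff := natCast_dvd_coeff hcongr 0
  rw [AddMonoidAlgebra.coeff_sub, Finsupp.sub_apply, coeff_zero_universalGaussSum_pow hω,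
    coeff_one_sub_universalAddChar_pow, zero_sub, dvd_neg, Nat.cast_pow] at hcoeff
  exact (PadicInt.pow_p_dvd_int_iff _ _).1 hcoeff

lemma Fp_eq_zpow_mul_fleckSum {p n : ℕ} (hp : 0 < p) (hn : 0 < n) (r : ℤ) :
    Fp p n r = (-(p : ℚ)) ^ (-((n - 1) / (p - 1) : ℕ) : ℤ) * fleckSum p n r := by
  have hfloor : Int.fdiv ((n : ℤ) - 1) ((p : ℤ) - 1) = ((n - 1) / (p - 1) : ℕ) := by
    rw [Int.fdiv_eq_ediv_of_nonneg _ (by lia), Int.natCast_div, Nat.cast_pred hp, Nat.cast_pred hn]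
  rw [Fp, hfloor, Cp_eq_fleckSum, if_neg hn.ne', add_zero]

lemma exists_Fp_eq_intCast {p n a : ℕ} {r : ℤ} (hp : 0 < p) (hn : 0 < n)
    (h : (p : ℤ) ^ ((n - 1) / (p - 1) + a) ∣ fleckSum p n r) :
    ∃ z : ℤ, (p : ℤ) ^ a ∣ z ∧ Fp p n r = z := by
  obtain ⟨e, he⟩ := h
  refine ⟨(-1) ^ ((n - 1) / (p - 1)) * (p ^ a * e), (dvd_mul_right _ e).mul_left _, ?_⟩
  rw [Fp_eq_zpow_mul_fleckSum hp hn, he, zpow_neg, zpow_natCast, neg_pow, mul_inv, ← inv_pow]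
  push_cast [pow_add]
  field_simp

end Fleck

theorem stmt5 (p n : ℕ) (hp : p.Prime) (hodd : Odd p) (hn : 0 < n) (h : ¬ (p - 1) ∣ n) :
    Fp p n 0 = 0 ∨ (padicValNat p n : ℤ) ≤ padicValRat p (Fp p n 0) := by
  have := Fact.mk hp
  have hdvd : (p : ℤ) ^ ((n - 1) / (p - 1) + padicValNat p n) ∣ fleckSum p n (0 : ℤ) := by
    rw [Int.cast_zero]
    exact pow_dvd_fleckSum_zero hp h pow_padicValNat_dvd
  obtain ⟨z, hz, hF⟩ := exists_Fp_eq_intCast hp.pos hn hdvd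
  rw [hF, padicValRat.of_int, Nat.cast_le, Int.cast_eq_zero]
  exact (padicValInt_dvd_iff _ _).1 hz
end
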